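/- (Growth exponents of expected face numbers.) Fix r ≥ 0 and reals α_0, …, α_r > 0 with α_i ∉ ℤ for all i and α_i − α_j ∉ ℤ for i ≠ j. Set β_i = i + 1 − α_i, β* = max{β_0, …, β_r}, k* = ⌊β*⌋, let i* be the unique index with β_{i*} = β*, and for k ≤ r set β*_k = max{β_k, …, β_r}. For each n consider the upper-model random complex in Δ_n with parameters p_σ = n^{−α_i} for dim σ = i ≤ r and p_σ = 0 for dim σ > r, and let E_n(f_k) denote the expected number of k-dimensional simplices, so that E_n(f_k) = C(n+1, k+1)·(1 − ∏_{i=k}^{r} (1 − n^{−α_i})^{C(n−k, i−k)}). Assume k* ≥ 0. Then for every k ∈ {0, …, r} the limit γ_k = lim_{n→∞} log E_n(f_k) / log n exists and equals: k + 1 if k < k*; β* if k* ≤ k ≤ i*; and β*_k if k > i*. In particular γ_k is constant and maximal, equal to β*, for all k with k* ≤ k ≤ i*. -/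

import Mathlib

open Finset

/-- The full simplex `Δₙ`: all nonempty subsets of `[n] = {0,…,n}`. -/
def simplexAll (n : ℕ) : Finset (Finset (Fin (n+1))) :=
  Finset.univ.filter fun σ => σ.Nonempty

/-- The boundary `∂Δₙ`: all nonempty proper subsets of `[n]`. -/
def bdry (n : ℕ) : Finset (Finset (Fin (n+1))) :=
  Finset.univ.filter fun σ => σ.Nonempty ∧ σ ≠ Finset.univ

/-- A hypergraph is a simplicial complex if it is closed under passing to
nonempty subsets. -/
def IsComplex {n : ℕ} (X : Finset (Finset (Fin (n+1)))) : Prop :=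
  ∀ σ ∈ X, ∀ τ : Finset (Fin (n+1)), τ ⊆ σ → τ.Nonempty → τ ∈ X

instance {n : ℕ} (X : Finset (Finset (Fin (n+1)))) : Decidable (IsComplex X) :=
  inferInstanceAs (Decidable (∀ σ ∈ X, ∀ τ : Finset (Fin (n+1)), τ ⊆ σ → τ.Nonempty → τ ∈ X))

/-- The dual hypergraph `c(X) = {σ̂ : σ ∈ ∂Δₙ, σ ∉ X}`, where `σ̂ = [n] \ σ`. -/
def dual {n : ℕ} (X : Finset (Finset (Fin (n+1)))) : Finset (Finset (Fin (n+1))) :=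
  (bdry n \ X).image fun σ => σᶜ

/-- `X̄`: the smallest simplicial complex containing the hypergraph `X`. -/
def clUp {n : ℕ} (X : Finset (Finset (Fin (n+1)))) : Finset (Finset (Fin (n+1))) :=
  Finset.univ.filter fun τ => τ.Nonempty ∧ ∃ σ ∈ X, τ ⊆ σ

/-- `X̲`: the largest simplicial complex contained in the hypergraph `X`. -/
def clLow {n : ℕ} (X : Finset (Finset (Fin (n+1)))) : Finset (Finset (Fin (n+1))) :=
  Finset.univ.filter fun τ => τ.Nonempty ∧ ∀ σ : Finset (Fin (n+1)), σ ⊆ τ → σ.Nonempty → σ ∈ X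

/-- The Bernoulli measure with parameters `p` on hypergraphs contained in the
ambient set `S` of simplices: `P(X) = ∏_{σ∈X} p σ · ∏_{σ∈S\X} (1 - p σ)`. -/
def bern {n : ℕ} (S : Finset (Finset (Fin (n+1)))) (p : Finset (Fin (n+1)) → ℝ)
    (X : Finset (Finset (Fin (n+1)))) : ℝ :=
  (∏ σ ∈ X, p σ) * ∏ σ ∈ S \ X, (1 - p σ)

/-- The upper measure: `P̄(Y) = Σ_{X ⊆ S, X̄ = Y} P(X)`. -/
def upperP {n : ℕ} (S : Finset (Finset (Fin (n+1)))) (p : Finset (Fin (n+1)) → ℝ)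
    (Y : Finset (Finset (Fin (n+1)))) : ℝ :=
  ∑ X ∈ S.powerset.filter (fun X => clUp X = Y), bern S p X

/-- The lower measure: `P̲(Y) = Σ_{X ⊆ S, X̲ = Y} P(X)`. -/
def lowerP {n : ℕ} (S : Finset (Finset (Fin (n+1)))) (p : Finset (Fin (n+1)) → ℝ)
    (Y : Finset (Finset (Fin (n+1)))) : ℝ :=
  ∑ X ∈ S.powerset.filter (fun X => clLow X = Y), bern S p X

/-- External simplices of `Y` relative to the ambient set `S`: simplices
`σ ∈ S` with `σ ∉ Y` but every nonempty proper subset of `σ` in `Y`. -/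
def extSimp {n : ℕ} (S Y : Finset (Finset (Fin (n+1)))) : Finset (Finset (Fin (n+1))) :=
  S.filter fun σ => σ ∉ Y ∧ ∀ τ : Finset (Fin (n+1)), τ ⊂ σ → τ.Nonempty → τ ∈ Y

/-- Maximal simplices of `Y`: simplices of `Y` not properly contained in another
simplex of `Y`. -/
def maxSimp {n : ℕ} (Y : Finset (Finset (Fin (n+1)))) : Finset (Finset (Fin (n+1))) :=
  Y.filter fun σ => ∀ τ ∈ Y, σ ⊆ τ → σ = τ

/-- The expected number of `k`-dimensional simplices of the upper-model random
complex in `Δₙ` with parameters `p_σ = n^{-α_i}` for `dim σ = i ≤ r` and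
`p_σ = 0` for `dim σ > r`. -/
noncomputable def expectedFk (r : ℕ) (α : ℕ → ℝ) (k n : ℕ) : ℝ :=
  ∑ Y ∈ (simplexAll n).powerset.filter (fun Y => IsComplex Y),
    ((Y.filter (fun σ => σ.card = k+1)).card : ℝ) *
      upperP (simplexAll n)
        (fun σ => if σ.card ≤ r+1 then (n : ℝ) ^ (-(α (σ.card - 1))) else 0) Y

theorem prod_powerset_card_aux {ι : Type*} [DecidableEq ι] (f : ℕ → ℝ) (x : Finset ι) :
    ∏ m ∈ x.powerset, f m.card = ∏ m ∈ Finset.range (x.card + 1), f m ^ (x.card.choose m) := by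
  rw [← Finset.prod_fiberwise_of_maps_to (g := Finset.card) (t := Finset.range (x.card + 1))]
  · refine Finset.prod_congr rfl fun y _ => ?_
    have : x.powerset.filter (fun a => a.card = y) = Finset.powersetCard y x := by
      ext a; simp [Finset.mem_powersetCard]
    rw [this, ← Finset.card_powersetCard, ← Finset.prod_const]
    refine Finset.prod_congr rfl fun z hz => ?_
    rw [(Finset.mem_powersetCard.mp hz).2]
  · intro a ha
    rw [Finset.mem_powerset] at ha
    have := Finset.card_le_card ha
    simp; omega


theorem clUp_mem_aux {n : ℕ} (X : Finset (Finset (Fin (n+1)))) :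
    clUp X ∈ (simplexAll n).powerset.filter (fun Y => IsComplex Y) := by
  rw [Finset.mem_filter, Finset.mem_powerset]
  refine ⟨fun τ hτ => ?_, ?_⟩
  · simp only [clUp, simplexAll, Finset.mem_filter, Finset.mem_univ, true_and] at hτ ⊢
    exact hτ.1
  · intro σ hσ τ hτσ hτ
    simp only [clUp, Finset.mem_filter, Finset.mem_univ, true_and] at hσ ⊢
    obtain ⟨_, ρ, hρ, h⟩ := hσ
    exact ⟨hτ, ρ, hρ, hτσ.trans h⟩

theorem bern_total {n : ℕ} (S : Finset (Finset (Fin (n+1)))) (p : Finset (Fin (n+1)) → ℝ) :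
    ∑ X ∈ S.powerset, bern S p X = 1 := by
  have h := Finset.prod_add p (fun σ => 1 - p σ) S
  simp only [add_sub_cancel, Finset.prod_const_one] at h
  exact h.symm

theorem bern_avoid {n : ℕ} (S T : Finset (Finset (Fin (n+1)))) (hT : T ⊆ S)
    (p : Finset (Fin (n+1)) → ℝ) :
    ∑ X ∈ T.powerset, bern S p X = ∏ τ ∈ S \ T, (1 - p τ) := by
  have : ∀ X ∈ T.powerset, bern S p X = bern T p X * ∏ τ ∈ S \ T, (1 - p τ) := by
    intro X hX
    rw [Finset.mem_powerset] at hX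
    unfold bern
    rw [mul_assoc]
    congr 1
    rw [← Finset.prod_union]
    · congr 1
      ext a
      simp only [Finset.mem_sdiff, Finset.mem_union]
      have := @hT a
      have := @hX a
      tauto
    · rw [Finset.disjoint_left]
      intro a ha hb
      simp only [Finset.mem_sdiff] at ha hb
      exact hb.2 ha.1
  rw [Finset.sum_congr rfl this, ← Finset.sum_mul, bern_total, one_mul]

theorem face_prob {n : ℕ} (p : Finset (Fin (n+1)) → ℝ) (σ : Finset (Fin (n+1)))
    (hσ : σ.Nonempty) :
    ∑ X ∈ (simplexAll n).powerset, (if σ ∈ clUp X then bern (simplexAll n) p X else 0)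
      = 1 - ∏ τ ∈ Finset.univ.filter (fun τ => σ ⊆ τ), (1 - p τ) := by
  set S := simplexAll n with hS
  have h1 : ∑ X ∈ S.powerset, (if σ ∈ clUp X then bern S p X else 0)
      + ∑ X ∈ S.powerset, (if σ ∈ clUp X then 0 else bern S p X) = 1 := by
    rw [← Finset.sum_add_distrib, ← bern_total S p]
    refine Finset.sum_congr rfl fun X _ => ?_
    split_ifs <;> simp
  have h2 : ∑ X ∈ S.powerset, (if σ ∈ clUp X then 0 else bern S p X)
      = ∑ X ∈ (S.filter (fun τ => ¬ σ ⊆ τ)).powerset, bern S p X := by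
    have h0 : ∑ X ∈ S.powerset, (if σ ∈ clUp X then 0 else bern S p X)
        = ∑ X ∈ S.powerset, (if ¬ (σ ∈ clUp X) then bern S p X else 0) :=
      Finset.sum_congr rfl fun X _ => by rw [ite_not]
    rw [h0, ← Finset.sum_filter]
    refine Finset.sum_congr ?_ fun _ _ => rfl
    ext X
    simp only [Finset.mem_filter, Finset.mem_powerset, clUp, Finset.mem_univ, true_and,
      Finset.subset_iff (s₁ := X), not_and, not_exists]
    constructor
    · rintro ⟨h, h'⟩ τ hτ
      exact ⟨h hτ, h' hσ τ hτ⟩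
    · intro h
      exact ⟨fun τ hτ => (h hτ).1, fun _ τ hτ => (h hτ).2⟩
  rw [h2, bern_avoid _ _ (Finset.filter_subset _ _)] at h1
  have h3 : S \ S.filter (fun τ => ¬ σ ⊆ τ) = Finset.univ.filter (fun τ => σ ⊆ τ) := by
    ext τ
    simp only [Finset.mem_sdiff, Finset.mem_filter, Finset.mem_univ, true_and, hS, simplexAll]
    constructor
    · rintro ⟨h, h'⟩
      by_contra h''
      exact h' ⟨h, h''⟩
    · intro h
      exact ⟨hσ.mono h, fun h' => h'.2 h⟩
  rw [h3] at h1
  linarith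

theorem prod_above {n k r : ℕ} (hk : k ≤ r) (g : ℕ → ℝ) (σ : Finset (Fin (n+1)))
    (hσ : σ.card = k+1) :
    ∏ τ ∈ Finset.univ.filter (fun τ => σ ⊆ τ),
      (1 - (if τ.card ≤ r+1 then g (τ.card - 1) else 0))
      = ∏ i ∈ Finset.Icc k r, (1 - g i) ^ ((n-k).choose (i-k)) := by
  have hc : σᶜ.card = n - k := by
    rw [Finset.card_compl, hσ, Fintype.card_fin]; omega
  have h1 : ∏ τ ∈ Finset.univ.filter (fun τ => σ ⊆ τ),
      (1 - (if τ.card ≤ r+1 then g (τ.card - 1) else 0))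
      = ∏ u ∈ σᶜ.powerset, (fun m => 1 - (if m + k ≤ r then g (m + k) else 0)) u.card := by
    symm
    refine Finset.prod_bij (fun u _ => σ ∪ u) ?_ ?_ ?_ ?_
    · intro u _; simp
    · intro u hu v hv h
      rw [Finset.mem_powerset, Finset.subset_compl_comm, 
        le_compl_iff_disjoint_right] at hu hv
      have := congrArg (fun s => s \ σ) h
      simpa [Finset.union_sdiff_left, hu.symm.sdiff_eq_left, hv.symm.sdiff_eq_left] using this
    · intro τ hτ
      simp only [Finset.mem_filter, Finset.mem_univ, true_and] at hτ
      refine ⟨τ \ σ, ?_, Finset.union_sdiff_of_subset hτ⟩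
      rw [Finset.mem_powerset]
      intro a ha
      simp only [Finset.mem_sdiff, Finset.mem_compl] at ha ⊢
      exact ha.2
    · intro u hu
      rw [Finset.mem_powerset, Finset.subset_compl_comm, 
        le_compl_iff_disjoint_right] at hu
      have : (σ ∪ u).card = u.card + k + 1 := by
        rw [Finset.card_union_of_disjoint hu, hσ]; ring
      simp [this]
  rw [h1, prod_powerset_card_aux (fun m => 1 - (if m + k ≤ r then g (m + k) else 0)), hc]
  have h2 : ∏ i ∈ Finset.Icc k r, (1 - g i) ^ ((n-k).choose (i-k))
      = ∏ m ∈ Finset.range (r - k + 1), (1 - (if m + k ≤ r then g (m + k) else 0)) ^ ((n-k).choose m) := by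
    symm
    refine Finset.prod_bij (fun m _ => m + k) ?_ ?_ ?_ ?_
    · intro m hm; simp at hm ⊢; omega
    · intro a _ b _ h; simpa using h
    · intro i hi; simp at hi; exact ⟨i - k, by simp; omega, by simp [hi.1]⟩
    · intro m hm
      simp at hm
      rw [if_pos (by omega), Nat.add_sub_cancel]
  rw [h2]
  have h3 : ∀ A B : ℕ, (∀ m, A ≤ m → (1 - (if m + k ≤ r then g (m + k) else 0)) ^ ((n-k).choose m) = 1) →
     A ≤ B → ∏ m ∈ Finset.range A, (1 - (if m + k ≤ r then g (m + k) else 0)) ^ ((n-k).choose m)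
      = ∏ m ∈ Finset.range B, (1 - (if m + k ≤ r then g (m + k) else 0)) ^ ((n-k).choose m) := by
    intro A B h hAB
    refine Finset.prod_subset (Finset.range_mono hAB) ?_
    intro m _ hm
    exact h m (by simpa using hm)
  rw [h3 (n - k + 1) (max (n-k+1) (r-k+1)) _ (le_max_left _ _),
    h3 (r - k + 1) (max (n-k+1) (r-k+1)) _ (le_max_right _ _)]
  · intro m hm
    rw [if_neg (by omega)]; simp
  · intro m hm
    rw [Nat.choose_eq_zero_of_lt (by omega)]; simp

theorem expectedFk_formula (r : ℕ) (α : ℕ → ℝ) (k n : ℕ) (hk : k ≤ r) :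
    expectedFk r α k n
        = ((n+1).choose (k+1) : ℝ) *
            (1 - ∏ i ∈ Finset.Icc k r,
              (1 - (n : ℝ) ^ (-(α i))) ^ ((n-k).choose (i-k))) := by
  unfold expectedFk
  set p : Finset (Fin (n+1)) → ℝ :=
    (fun σ => if σ.card ≤ r+1 then (n : ℝ) ^ (-(α (σ.card - 1))) else 0) with hp
  have h1 : ∑ Y ∈ (simplexAll n).powerset.filter (fun Y => IsComplex Y),
    ((Y.filter (fun σ => σ.card = k+1)).card : ℝ) * upperP (simplexAll n) p Y
    = ∑ X ∈ (simplexAll n).powerset,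
      (((clUp X).filter (fun σ => σ.card = k+1)).card : ℝ) * bern (simplexAll n) p X := by
    rw [← Finset.sum_fiberwise_of_maps_to (s := (simplexAll n).powerset) (g := clUp)
      (fun X _ => clUp_mem_aux X)]
    refine Finset.sum_congr rfl fun Y _ => ?_
    unfold upperP
    rw [Finset.mul_sum]
    refine Finset.sum_congr rfl fun X hX => ?_
    rw [(Finset.mem_filter.mp hX).2]
  rw [h1]
  have h2 : ∀ X : Finset (Finset (Fin (n+1))),
      (((clUp X).filter (fun σ => σ.card = k+1)).card : ℝ) * bern (simplexAll n) p X
      = ∑ σ ∈ Finset.powersetCard (k+1) (Finset.univ : Finset (Fin (n+1))),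
        if σ ∈ clUp X then bern (simplexAll n) p X else 0 := by
    intro X
    rw [← Finset.sum_filter, Finset.sum_const, nsmul_eq_mul]
    congr 3
    ext σ
    simp [Finset.mem_powersetCard, and_comm]
  simp_rw [h2]
  rw [Finset.sum_comm]
  have h3 : ∀ σ ∈ Finset.powersetCard (k+1) (Finset.univ : Finset (Fin (n+1))),
      ∑ X ∈ (simplexAll n).powerset, (if σ ∈ clUp X then bern (simplexAll n) p X else 0)
      = (1 - ∏ i ∈ Finset.Icc k r,
              (1 - (n : ℝ) ^ (-(α i))) ^ ((n-k).choose (i-k))) := by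
    intro σ hσ
    have hc := (Finset.mem_powersetCard.mp hσ).2
    rw [face_prob p σ (Finset.card_pos.mp (by omega)), hp,
      prod_above hk (fun i => (n : ℝ) ^ (-(α i))) σ hc]
  rw [Finset.sum_congr rfl h3, Finset.sum_const, Finset.card_powersetCard, nsmul_eq_mul]
  simp

theorem log_ratio_limit (E : ℕ → ℝ) (L c C : ℝ) (hc : 0 < c)
    (h : ∀ᶠ n : ℕ in Filter.atTop, c * (n : ℝ) ^ L ≤ E n ∧ E n ≤ C * (n : ℝ) ^ L) :
    Filter.Tendsto (fun n : ℕ => Real.log (E n) / Real.log n) Filter.atTop (nhds L) := by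
  have hlog : Filter.Tendsto (fun n : ℕ => Real.log (n : ℝ)) Filter.atTop Filter.atTop :=
    Real.tendsto_log_atTop.comp tendsto_natCast_atTop_atTop
  have hlim : ∀ a : ℝ, Filter.Tendsto (fun n : ℕ => Real.log a / Real.log n + L)
      Filter.atTop (nhds L) := by
    intro a
    have := (hlog.const_div_atTop (Real.log a)).add_const L
    simpa using this
  refine tendsto_of_tendsto_of_tendsto_of_le_of_le' (hlim c) (hlim C) ?_ ?_
  · filter_upwards [h, Filter.eventually_ge_atTop 2] with n hn h2
    have h2' : (2:ℝ) ≤ n := by exact_mod_cast h2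
    have hl : 0 < Real.log n := Real.log_pos (by linarith)
    have hp : 0 < (n:ℝ) ^ L := Real.rpow_pos_of_pos (by linarith) _
    rw [div_add' _ _ _ hl.ne']
    gcongr
    rw [← Real.log_rpow (by linarith), ← Real.log_mul hc.ne' hp.ne']
    exact Real.log_le_log (by positivity) hn.1
  · filter_upwards [h, Filter.eventually_ge_atTop 2] with n hn h2
    have h2' : (2:ℝ) ≤ n := by exact_mod_cast h2
    have hl : 0 < Real.log n := Real.log_pos (by linarith)
    have hp : 0 < (n:ℝ) ^ L := Real.rpow_pos_of_pos (by linarith) _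
    have hE : 0 < E n := lt_of_lt_of_le (by positivity) hn.1
    have hC : 0 < C := by
      by_contra hC
      have : C * (n:ℝ)^L ≤ 0 := mul_nonpos_of_nonpos_of_nonneg (not_lt.mp hC) hp.le
      linarith [hn.2]
    rw [div_add' _ _ _ hl.ne']
    gcongr
    rw [← Real.log_rpow (by linarith), ← Real.log_mul hC.ne' hp.ne']
    exact Real.log_le_log hE hn.2

theorem choose_lower (n m a : ℕ) (h : a ≤ 2 * (m + 1 - a)) (hn : n ≤ 2 * (m + 1 - a)) :
    (n:ℝ) ^ a / (2 ^ a * (a.factorial : ℝ)) ≤ (m.choose a : ℝ) := by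
  refine le_trans ?_ (Nat.pow_le_choose (α := ℝ) a m)
  rw [← div_div, ← div_pow]
  gcongr
  have : (n:ℝ) ≤ 2 * ((m + 1 - a : ℕ) : ℝ) := by exact_mod_cast hn
  linarith

theorem one_sub_prod_le {ι : Type*} (s : Finset ι) (x : ι → ℝ) (N : ι → ℕ)
    (h0 : ∀ i ∈ s, 0 ≤ x i) (h1 : ∀ i ∈ s, x i ≤ 1) :
    1 - ∏ i ∈ s, (1 - x i) ^ N i ≤ ∑ i ∈ s, (N i : ℝ) * x i := by
  classical
  induction s using Finset.induction_on with
  | empty => simp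
  | insert a s ha ih =>
    rw [Finset.prod_insert ha, Finset.sum_insert ha]
    have ih' := ih (fun i hi => h0 i (Finset.mem_insert_of_mem hi))
      (fun i hi => h1 i (Finset.mem_insert_of_mem hi))
    have a0 := h0 a (Finset.mem_insert_self _ _)
    have a1 := h1 a (Finset.mem_insert_self _ _)
    have hb := one_add_mul_le_pow (a := - x a) (by linarith) (N a)
    rw [← sub_eq_add_neg 1 (x a)] at hb
    have hP0 : 0 ≤ ∏ i ∈ s, (1 - x i) ^ N i := Finset.prod_nonneg fun i hi =>
      pow_nonneg (by linarith [h1 i (Finset.mem_insert_of_mem hi)]) _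
    have hP1 : ∏ i ∈ s, (1 - x i) ^ N i ≤ 1 := Finset.prod_le_one (fun i hi =>
      pow_nonneg (by linarith [h1 i (Finset.mem_insert_of_mem hi)]) _) fun i hi =>
      pow_le_one₀ (by linarith [h1 i (Finset.mem_insert_of_mem hi)])
        (by linarith [h0 i (Finset.mem_insert_of_mem hi)])
    have hA1 : (1 - x a) ^ N a ≤ 1 := pow_le_one₀ (by linarith) (by linarith)
    nlinarith [mul_nonneg (sub_nonneg.2 hA1) (sub_nonneg.2 hP1)]

theorem one_sub_pow_lower (x : ℝ) (N : ℕ) (h0 : 0 ≤ x) (h1 : x ≤ 1) :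
    min 1 (N * x) / 2 ≤ 1 - (1 - x) ^ N := by
  have hS : 0 ≤ N * x := by positivity
  have h : (1 - x) ^ N ≤ 1 / (1 + N * x) := by
    rw [le_div_iff₀ (by linarith)]
    have hb := one_add_mul_le_pow (a := x) (by linarith) N
    calc (1 - x) ^ N * (1 + N * x) ≤ (1 - x) ^ N * (1 + x) ^ N := by
          gcongr
      _ = (1 - x ^ 2) ^ N := by rw [← mul_pow]; ring
      _ ≤ 1 := pow_le_one₀ (by nlinarith) (by nlinarith)
  have h' : min 1 (N * x) / 2 ≤ 1 - 1 / (1 + N * x) := by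
    rw [show 1 - 1 / (1 + N * x) = (N * x) / (1 + N * x) by field_simp; ring]
    rw [div_le_div_iff₀ (by norm_num) (by linarith)]
    rcases le_total 1 (N * x) with hh | hh
    · rw [min_eq_left hh]; linarith
    · rw [min_eq_right hh]; nlinarith
  linarith

theorem growth_limit (r : ℕ) (α : ℕ → ℝ) (hpos : ∀ i ≤ r, 0 < α i)
    (β : ℕ → ℝ) (hβ : ∀ i, β i = (i : ℝ) + 1 - α i)
    (k : ℕ) (hk : k ≤ r) (M : ℝ) (hM : ∀ i, k ≤ i → i ≤ r → β i ≤ M)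
    (j : ℕ) (hkj : k ≤ j) (hj : j ≤ r) (hjM : β j = M) :
    Filter.Tendsto (fun n : ℕ => Real.log (expectedFk r α k n) / Real.log n)
      Filter.atTop (nhds (min ((k:ℝ) + 1) M)) := by
  set c₁ : ℝ := 1 / (2 ^ (k+1) * ((k+1).factorial : ℝ)) with hc₁
  set c₂ : ℝ := 1 / (2 ^ (j-k) * ((j-k).factorial : ℝ)) with hc₂
  have hc₁p : 0 < c₁ := by positivity
  have hc₂p : 0 < c₂ := by positivity
  have hc₂1 : c₂ ≤ 1 := by
    rw [hc₂, div_le_one (by positivity)]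
    have h1 : (1:ℝ) ≤ 2 ^ (j-k) := one_le_pow₀ (by norm_num)
    have h2 : (1:ℝ) ≤ ((j-k).factorial : ℝ) := by exact_mod_cast Nat.factorial_pos _
    nlinarith
  refine log_ratio_limit _ _ (c₁ * (c₂ / 2)) (2 ^ (k+1) * ((r:ℝ)+1)) (by positivity) ?_
  filter_upwards [Filter.eventually_ge_atTop (2 * r + 2)] with n hn
  rw [expectedFk_formula r α k n hk]
  have hn1 : (1:ℝ) ≤ n := by exact_mod_cast (by omega : 1 ≤ n)
  have hn0 : (0:ℝ) < n := by linarith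
  set P : ℝ := ∏ i ∈ Finset.Icc k r, (1 - (n : ℝ) ^ (-(α i))) ^ ((n-k).choose (i-k)) with hP
  have hx0 : ∀ i, 0 ≤ (n:ℝ) ^ (-(α i)) := fun i => Real.rpow_nonneg hn0.le _
  have hx1 : ∀ i, i ≤ r → (n:ℝ) ^ (-(α i)) ≤ 1 := fun i hi =>
    Real.rpow_le_one_of_one_le_of_nonpos hn1 (by linarith [hpos i hi])
  have hminpow : (n:ℝ) ^ (min ((k:ℝ)+1) M) = (n:ℝ) ^ (k+1) * min 1 ((n:ℝ) ^ (M - k - 1)) := by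
    have e1 : (n:ℝ) ^ (k+1) = (n:ℝ) ^ ((k:ℝ)+1) := by
      rw [← Real.rpow_natCast]; push_cast; rfl
    rcases le_total ((k:ℝ)+1) M with h | h
    · rw [min_eq_left h, min_eq_left (Real.one_le_rpow hn1 (by linarith)), e1, mul_one]
    · rw [min_eq_right h, min_eq_right (Real.rpow_le_one_of_one_le_of_nonpos hn1 (by linarith)),
        e1, ← Real.rpow_add hn0]
      congr 1; ring
  have hpw : ∀ i, k ≤ i → (n:ℝ) ^ (i - k) * (n:ℝ) ^ (-(α i)) = (n:ℝ) ^ (β i - k - 1) := by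
    intro i hi
    rw [← Real.rpow_natCast, ← Real.rpow_add hn0, hβ]
    congr 1
    push_cast [Nat.cast_sub hi]
    ring
  rw [hminpow]
  set T : ℝ := (n:ℝ) ^ (M - k - 1) with hT
  have hT0 : 0 < T := Real.rpow_pos_of_pos hn0 _
  have hmT : 0 < min 1 T := lt_min one_pos hT0
  have hch0 : (0:ℝ) ≤ ((n+1).choose (k+1) : ℝ) := by positivity
  constructor
  · have l1 : c₁ * (n:ℝ)^(k+1) ≤ ((n+1).choose (k+1) : ℝ) := by
      have := choose_lower n (n+1) (k+1) (by omega) (by omega)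
      rw [hc₁, one_div_mul_eq_div]; exact this
    have l2 : c₂ * (n:ℝ)^(j-k) ≤ ((n-k).choose (j-k) : ℝ) := by
      have := choose_lower n (n-k) (j-k) (by omega) (by omega)
      rw [hc₂, one_div_mul_eq_div]; exact this
    have l3 : c₂ * T ≤ ((n-k).choose (j-k) : ℝ) * (n:ℝ) ^ (-(α j)) := by
      rw [hT, ← hjM, ← hpw j hkj, ← mul_assoc]
      exact mul_le_mul_of_nonneg_right l2 (hx0 j)
    have l4 := one_sub_pow_lower ((n:ℝ) ^ (-(α j))) ((n-k).choose (j-k)) (hx0 j) (hx1 j hj)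
    have l5 : P ≤ (1 - (n:ℝ) ^ (-(α j))) ^ ((n-k).choose (j-k)) := by
      have := Finset.prod_le_prod_of_subset_of_le_one (s := {j}) (t := Finset.Icc k r)
        (f := fun i => (1 - (n : ℝ) ^ (-(α i))) ^ ((n-k).choose (i-k)))
        (by simp; omega)
        (fun i hi => pow_nonneg (by linarith [hx1 i (Finset.mem_Icc.mp hi).2]) _)
        (fun i hi _ => pow_le_one₀ (by linarith [hx1 i (Finset.mem_Icc.mp hi).2])
          (by linarith [hx0 i]))
      simpa using this
    have l6 : c₂ * min 1 T ≤ min 1 (((n-k).choose (j-k) : ℝ) * (n:ℝ) ^ (-(α j))) := by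
      refine le_min ?_ ?_
      · exact mul_le_one₀ hc₂1 hmT.le (min_le_left _ _)
      · exact (mul_le_mul_of_nonneg_left (min_le_right _ _) hc₂p.le).trans l3
    have l7 : c₂ / 2 * min 1 T ≤ 1 - P := by linarith
    calc c₁ * (c₂ / 2) * ((n:ℝ)^(k+1) * min 1 T)
        = (c₁ * (n:ℝ)^(k+1)) * (c₂ / 2 * min 1 T) := by ring
      _ ≤ _ := mul_le_mul l1 l7 (by positivity) hch0
  · have u1 : ((n+1).choose (k+1) : ℝ) ≤ 2 ^ (k+1) * (n:ℝ)^(k+1) := by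
      have h1 : ((n+1).choose (k+1) : ℝ) ≤ ((n:ℝ)+1) ^ (k+1) := by
        exact_mod_cast Nat.choose_le_pow (n+1) (k+1)
      refine h1.trans ?_
      rw [← mul_pow]
      gcongr
      linarith
    have u2 : 1 - P ≤ 1 := by
      have : 0 ≤ P := Finset.prod_nonneg fun i hi =>
        pow_nonneg (by linarith [hx1 i (Finset.mem_Icc.mp hi).2]) _
      linarith
    have u3 : 1 - P ≤ ((r:ℝ)+1) * T := by
      refine (one_sub_prod_le (Finset.Icc k r) (fun i => (n:ℝ) ^ (-(α i)))
        (fun i => (n-k).choose (i-k)) (fun i _ => hx0 i)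
        (fun i hi => hx1 i (Finset.mem_Icc.mp hi).2)).trans ?_
      have : ∀ i ∈ Finset.Icc k r, ((n-k).choose (i-k) : ℝ) * (n:ℝ) ^ (-(α i)) ≤ T := by
        intro i hi
        rw [Finset.mem_Icc] at hi
        have h1 : ((n-k).choose (i-k) : ℝ) ≤ (n:ℝ) ^ (i-k) := by
          have : (n-k).choose (i-k) ≤ n ^ (i-k) :=
            (Nat.choose_le_pow _ _).trans (Nat.pow_le_pow_left (Nat.sub_le _ _) _)
          exact_mod_cast this
        calc _ ≤ (n:ℝ) ^ (i - k) * (n:ℝ) ^ (-(α i)) := mul_le_mul_of_nonneg_right h1 (hx0 i)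
          _ = (n:ℝ) ^ (β i - k - 1) := hpw i hi.1
          _ ≤ T := Real.rpow_le_rpow_of_exponent_le hn1 (by linarith [hM i hi.1 hi.2])
      refine (Finset.sum_le_card_nsmul _ _ _ this).trans ?_
      rw [nsmul_eq_mul, Nat.card_Icc]
      gcongr
      have : r + 1 - k ≤ r + 1 := Nat.sub_le _ _
      exact_mod_cast this
    have u4 : 1 - P ≤ ((r:ℝ)+1) * min 1 T := by
      have hr : (0:ℝ) ≤ r := by positivity
      rcases le_total 1 T with h | h
      · rw [min_eq_left h]; linarith
      · rw [min_eq_right h]; exact u3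
    calc ((n+1).choose (k+1) : ℝ) * (1 - P)
        ≤ ((n+1).choose (k+1) : ℝ) * (((r:ℝ)+1) * min 1 T) := mul_le_mul_of_nonneg_left u4 hch0
      _ ≤ (2 ^ (k+1) * (n:ℝ)^(k+1)) * (((r:ℝ)+1) * min 1 T) :=
          mul_le_mul_of_nonneg_right u1 (by positivity)
      _ = _ := by ring

/-- Growth exponents of expected face numbers in the upper model. With generic
exponents `α_0,…,α_r > 0`, `β_i = i+1-α_i`, `β* = max β_i`, `k* = ⌊β*⌋ ≥ 0`
(the critical dimension), `i*` the unique index with `β_{i*} = β*`, and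
`β*_k = max{β_k,…,β_r}`: the expected number of `k`-faces satisfies
`E_n(f_k) = C(n+1,k+1)·(1 - ∏_{i=k}^r (1-n^{-α_i})^{C(n-k,i-k)})`, and
`γ_k = lim_{n→∞} log E_n(f_k)/log n` exists and equals `k+1` for `k < k*`,
`β*` for `k* ≤ k ≤ i*`, and `β*_k` for `k > i*`. -/
theorem growth_exponents (r : ℕ) (α : ℕ → ℝ)
    (hpos : ∀ i ≤ r, 0 < α i)
    (hint : ∀ i ≤ r, ∀ m : ℤ, α i ≠ (m : ℝ))
    (hdiff : ∀ i ≤ r, ∀ j ≤ r, i ≠ j → ∀ m : ℤ, α i - α j ≠ (m : ℝ))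
    (β : ℕ → ℝ) (hβ : ∀ i, β i = (i : ℝ) + 1 - α i)
    (βstar : ℝ)
    (hβstar : βstar = (Finset.range (r+1)).sup'
      ⟨0, Finset.mem_range.mpr r.succ_pos⟩ β)
    (kstar : ℤ) (hkstar : kstar = ⌊βstar⌋) (hk0 : 0 ≤ kstar)
    (istar : ℕ) (histar : istar ≤ r ∧ β istar = βstar)
    (k : ℕ) (hk : k ≤ r) :
    (∀ n : ℕ, 1 ≤ n →
      expectedFk r α k n
        = ((n+1).choose (k+1) : ℝ) *
            (1 - ∏ i ∈ Finset.Icc k r,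
              (1 - (n : ℝ) ^ (-(α i))) ^ ((n-k).choose (i-k)))) ∧
    Filter.Tendsto (fun n : ℕ => Real.log (expectedFk r α k n) / Real.log n)
      Filter.atTop
      (nhds (if (k : ℤ) < kstar then (k : ℝ) + 1
             else if k ≤ istar then βstar
             else (Finset.Icc k r).sup' (Finset.nonempty_Icc.mpr hk) β)) := by
  refine ⟨fun n _ => expectedFk_formula r α k n hk, ?_⟩
  have hle : ∀ i ≤ r, β i ≤ βstar := fun i hi => by
    rw [hβstar]; exact Finset.le_sup' β (Finset.mem_range.mpr (by omega))
  have hfl : (kstar : ℝ) ≤ βstar := by rw [hkstar]; exact Int.floor_le _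
  have hfl' : βstar < (kstar : ℝ) + 1 := by rw [hkstar]; exact Int.lt_floor_add_one _
  obtain ⟨hir, hib⟩ := histar
  have hlt : βstar < (istar : ℝ) + 1 := by
    rw [← hib, hβ]; linarith [hpos istar hir]
  split_ifs with h1 h2
  · have h1' : (k : ℝ) + 1 ≤ kstar := by exact_mod_cast h1
    have hki : k ≤ istar := by
      have : (k : ℝ) < istar := by linarith
      exact (Nat.cast_lt.mp this).le
    have := growth_limit r α hpos β hβ k hk βstar (fun i _ hi => hle i hi) istar hki hir hib
    rwa [min_eq_left (by linarith)] at this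
  · have h1' : (kstar : ℝ) ≤ k := by exact_mod_cast not_lt.mp h1
    have := growth_limit r α hpos β hβ k hk βstar (fun i _ hi => hle i hi) istar h2 hir hib
    rwa [min_eq_right (by linarith)] at this
  · have h1' : (kstar : ℝ) ≤ k := by exact_mod_cast not_lt.mp h1
    obtain ⟨j, hj, hjM⟩ := Finset.exists_mem_eq_sup' (Finset.nonempty_Icc.mpr hk) β
    have hj' := Finset.mem_Icc.mp hj
    have := growth_limit r α hpos β hβ k hk _
      (fun i hi hi' => Finset.le_sup' β (Finset.mem_Icc.mpr ⟨hi, hi'⟩)) j hj'.1 hj'.2 hjM.symm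
    rwa [min_eq_right (by rw [hjM]; linarith [hle j hj'.2])] at this
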